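/- Let G be a finite group, p a prime, and H ≤ G a subgroup. The following are equivalent: (1) O^p(H) = O^p(G); (2) H contains O^p(G); (3) there exists a p-subnormal tower from H to G, i.e. a chain of subgroups H = H_r ⊴ H_{r-1} ⊴ ⋯ ⊴ H_1 ⊴ H_0 = G in which each H_{i+1} is a normal subgroup of H_i of index p. -/

import Mathlib

/-!
Call a subgroup `p`-open if it contains a normal subgroup of `p`-power index. The key point is that
a `p`-open subgroup of a `p`-open subgroup of `G` is `p`-open in `G`: intersecting finitely many
conjugates produces a normal subgroup of `G` whose index is still a power of `p`. Hence the bottom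
of a `p`-subnormal tower is `p`-open. Conversely, a `p`-open `H` is the preimage of a subgroup of a
finite `p`-group, where every proper subgroup is normal of index `p` in a larger one, so a tower
can be built step by step from `H` up to `G`.

A `p`-open subgroup has the same `p`-residual as `G`, again by transitivity. Finally, `O^p(G)` is
itself `p`-open as soon as it has finite index, being then a finite intersection, so every
subgroup containing it is `p`-open.
-/

/-- `pResidual p G` is `O^p(G)`: the intersection of all normal subgroups of `G`
whose index is a power of `p`. -/
def pResidual (p : ℕ) (G : Type*) [Group G] : Subgroup G :=
  ⨅ N ∈ {N : Subgroup G | N.Normal ∧ ∃ k : ℕ, N.index = p ^ k}, N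

/-- `H` is open in the pro-`p` topology of `G`, whose basic neighbourhoods of the identity are the
normal subgroups of `p`-power index. -/
def IsPOpen (p : ℕ) {G : Type*} [Group G] (H : Subgroup G) : Prop :=
  ∃ N ≤ H, N.Normal ∧ ∃ k : ℕ, N.index = p ^ k

/-- `H` is normal of index `n` in `K`: a single step of a subnormal tower. -/
def IsNormalOfIndex (n : ℕ) {G : Type*} [Group G] (H K : Subgroup G) : Prop :=
  H ≤ K ∧ (H.subgroupOf K).Normal ∧ (H.subgroupOf K).index = n

/-- There is a `p`-subnormal tower from `H` to `G`, numbered from the bottom up: `c 0 = H`. -/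
def HasPSubnormalTower (p : ℕ) {G : Type*} [Group G] (H : Subgroup G) : Prop :=
  ∃ (r : ℕ) (c : ℕ → Subgroup G), c 0 = H ∧ c r = ⊤ ∧ ∀ i < r, IsNormalOfIndex p (c i) (c (i + 1))

section General

variable {p : ℕ} {G G' : Type*} [Group G] [Group G']

theorem finite_Ici_of_finiteIndex (H : Subgroup G) [H.FiniteIndex] : (Set.Ici H).Finite := by
  have : Finite (Set.Ici H.normalCore) :=
    .of_equiv _ (QuotientGroup.comapMk'OrderIso H.normalCore).toEquiv
  exact (Set.toFinite (Set.Ici H.normalCore)).subset (Set.Ici_subset_Ici.2 H.normalCore_le)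

theorem exists_relIndex_eq_pow [Fact p.Prime] {N : Subgroup G} [N.Normal] {k : ℕ}
    (hN : N.index = p ^ k) (K : Subgroup G) : ∃ j : ℕ, N.relIndex K = p ^ j := by
  have hdvd : N.relIndex K ∣ p ^ k := hN ▸ Subgroup.relIndex_dvd_index_of_normal N K
  obtain ⟨j, -, hj⟩ := (Nat.dvd_prime_pow Fact.out).1 hdvd
  exact ⟨j, hj⟩

theorem normalCore_subgroupOf_eq_iInf_comap_conjNormal {N : Subgroup G} [N.Normal]
    (M : Subgroup N) :
    (M.map N.subtype).normalCore.subgroupOf N =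
      ⨅ g : G, M.comap (MulAut.conjNormal g : MulAut N).toMonoidHom := by
  ext x
  have key (g : G) : g * x * g⁻¹ ∈ M.map N.subtype ↔ MulAut.conjNormal g x ∈ M := by
    rw [← MulAut.conjNormal_apply]
    exact Subgroup.mem_map_iff_mem N.subtype_injective (x := MulAut.conjNormal g x)
  simp only [Subgroup.mem_iInf]
  exact forall_congr' key

namespace IsNormalOfIndex

variable {n : ℕ}

theorem comap {H K : Subgroup G'} (h : IsNormalOfIndex n H K) {f : G →* G'}
    (hf : Function.Surjective f) : IsNormalOfIndex n (H.comap f) (K.comap f) := by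
  obtain ⟨hle, hnormal, hindex⟩ := h
  refine ⟨Subgroup.comap_mono hle, hnormal.comap (f.subgroupComap K), ?_⟩
  change (H.comap f).relIndex (K.comap f) = n
  rwa [Subgroup.relIndex_comap, Subgroup.map_comap_eq_self_of_surjective hf]

theorem mul_index {H K : Subgroup G} (h : IsNormalOfIndex n H K) : n * K.index = H.index := by
  rw [← Subgroup.relIndex_mul_index h.1, Subgroup.relIndex, h.2.2]

end IsNormalOfIndex

theorem exists_isNormalOfIndex_of_card_eq_pow [Fact p.Prime] {m : ℕ} (hG : Nat.card G = p ^ m)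
    {H : Subgroup G} (hH : H ≠ ⊤) : ∃ K : Subgroup G, IsNormalOfIndex p H K := by
  have hp : p.Prime := Fact.out
  have : Finite G := Nat.finite_of_card_ne_zero (hG ▸ pow_ne_zero m hp.ne_zero)
  obtain ⟨n, hnm, hn⟩ := (Nat.dvd_prime_pow hp).1 (hG ▸ H.card_subgroup_dvd_card)
  have hlt : n < m :=
    hnm.lt_of_ne fun h ↦ hH (H.eq_top_of_card_eq (by rw [hn, hG, h]))
  obtain ⟨K, hK, hle⟩ :=
    Sylow.exists_subgroup_card_pow_succ (hG ▸ pow_dvd_pow p hlt) hn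
  have hindex : (H.subgroupOf K).index = p := by
    have hcard := (H.subgroupOf K).card_mul_index
    rw [Nat.card_congr (Subgroup.subgroupOfEquivOfLe hle).toEquiv, hn, hK, pow_succ] at hcard
    exact Nat.eq_of_mul_eq_mul_left (pow_pos hp.pos n) hcard
  refine ⟨K, hle, Subgroup.normal_of_index_eq_minFac_card ?_, hindex⟩
  rw [hindex, hK, hp.pow_minFac n.succ_ne_zero]

namespace HasPSubnormalTower

theorem top : HasPSubnormalTower p (⊤ : Subgroup G) :=
  ⟨0, fun _ ↦ ⊤, rfl, rfl, fun _ hi ↦ absurd hi (Nat.not_lt_zero _)⟩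

theorem of_isNormalOfIndex {H K : Subgroup G} (hK : HasPSubnormalTower p K)
    (hHK : IsNormalOfIndex p H K) : HasPSubnormalTower p H := by
  obtain ⟨r, c, rfl, hr, hc⟩ := hK
  refine ⟨r + 1, fun i ↦ Nat.casesOn i H c, rfl, hr, ?_⟩
  rintro (_ | i) hi
  · exact hHK
  · exact hc i (Nat.lt_of_succ_lt_succ hi)

end HasPSubnormalTower

end General

namespace IsPOpen

variable {p : ℕ} {G G' : Type*} [Group G] [Group G']

theorem of_index_eq_pow {N : Subgroup G} [hN : N.Normal] {k : ℕ} (h : N.index = p ^ k) :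
    IsPOpen p N :=
  ⟨N, le_rfl, hN, k, h⟩

theorem top : IsPOpen p (⊤ : Subgroup G) :=
  of_index_eq_pow (k := 0) (by rw [Subgroup.index_top, pow_zero])

theorem mono {H K : Subgroup G} (hH : IsPOpen p H) (hHK : H ≤ K) : IsPOpen p K :=
  let ⟨N, hNH, hN⟩ := hH
  ⟨N, hNH.trans hHK, hN⟩

theorem pResidual_le {H : Subgroup G} (hH : IsPOpen p H) : pResidual p G ≤ H :=
  let ⟨N, hNH, hN⟩ := hH
  (iInf₂_le N hN).trans hNH

variable [Fact p.Prime]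

theorem exists_index_eq_pow {H : Subgroup G} (hH : IsPOpen p H) : ∃ k : ℕ, H.index = p ^ k := by
  obtain ⟨N, hNH, -, k, hk⟩ := hH
  obtain ⟨j, -, hj⟩ := (Nat.dvd_prime_pow Fact.out).1 (hk ▸ Subgroup.index_dvd_of_le hNH)
  exact ⟨j, hj⟩

theorem comap {H : Subgroup G'} (hH : IsPOpen p H) (f : G →* G') : IsPOpen p (H.comap f) := by
  obtain ⟨N, hNH, _, k, hk⟩ := hH
  obtain ⟨j, hj⟩ := exists_relIndex_eq_pow hk f.range
  exact (of_index_eq_pow ((N.index_comap f).trans hj)).mono (Subgroup.comap_mono hNH)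

theorem inf {H K : Subgroup G} (hH : IsPOpen p H) (hK : IsPOpen p K) : IsPOpen p (H ⊓ K) := by
  obtain ⟨N, hNH, _, k, hk⟩ := hH
  obtain ⟨M, hMK, _, l, hl⟩ := hK
  obtain ⟨j, hj⟩ := exists_relIndex_eq_pow hk M
  have hindex : (N ⊓ M).index = p ^ (j + l) := by
    rw [← Subgroup.relIndex_mul_index (inf_le_right : N ⊓ M ≤ M), Subgroup.inf_relIndex_right,
      hj, hl, pow_add]
  exact (of_index_eq_pow hindex).mono (inf_le_inf hNH hMK)

theorem sInf_of_finiteIndex {S : Set (Subgroup G)} (hS : ∀ H ∈ S, IsPOpen p H)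
    [(sInf S).FiniteIndex] : IsPOpen p (sInf S) := by
  have hfinite : {K | sInf S ≤ K ∧ IsPOpen p K}.Finite :=
    (finite_Ici_of_finiteIndex (sInf S)).subset fun _ hK ↦ hK.1
  obtain ⟨K, ⟨hSK, hK⟩, hmin⟩ := hfinite.exists_minimal ⟨⊤, le_top, top⟩
  refine hK.mono (le_sInf fun H hH ↦ ?_)
  have hKH : K ≤ K ⊓ H := hmin ⟨le_inf hSK (sInf_le hH), hK.inf (hS H hH)⟩ inf_le_left
  exact hKH.trans inf_le_right

theorem map_subtype_of_normal {N : Subgroup G} [N.Normal] {k : ℕ} (hN : N.index = p ^ k)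
    {M : Subgroup N} (hM : IsPOpen p M) : IsPOpen p (M.map N.subtype) := by
  obtain ⟨l, hl⟩ := hM.exists_index_eq_pow
  have : (M.map N.subtype).FiniteIndex := ⟨by
    rw [Subgroup.index_map_subtype, hl, hN, ← pow_add]
    exact pow_ne_zero _ (Nat.Prime.ne_zero Fact.out)⟩
  set C := (M.map N.subtype).normalCore with hC
  have hCN : C ≤ N := (Subgroup.normalCore_le _).trans (Subgroup.map_subtype_le M)
  have hopen : IsPOpen p (C.subgroupOf N) := by
    have hfinite : (C.subgroupOf N).FiniteIndex := inferInstance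
    rw [hC, normalCore_subgroupOf_eq_iInf_comap_conjNormal, iInf] at hfinite ⊢
    exact sInf_of_finiteIndex (Set.forall_mem_range.2 fun _ ↦ hM.comap _)
  obtain ⟨j, hj⟩ := hopen.exists_index_eq_pow
  have hindex : C.index = p ^ (j + k) := by
    rw [← Subgroup.relIndex_mul_index hCN, Subgroup.relIndex, hj, hN, pow_add]
  exact (of_index_eq_pow hindex).mono (Subgroup.normalCore_le _)

theorem map_subtype {H : Subgroup G} (hH : IsPOpen p H) {L : Subgroup H} (hL : IsPOpen p L) :
    IsPOpen p (L.map H.subtype) := by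
  obtain ⟨N, hNH, _, k, hk⟩ := hH
  have hLN : IsPOpen p ((L.comap (Subgroup.inclusion hNH)).map N.subtype) :=
    map_subtype_of_normal hk (hL.comap _)
  refine hLN.mono ?_
  rw [← Subgroup.subtype_comp_inclusion hNH, ← Subgroup.map_map]
  exact Subgroup.map_mono (Subgroup.map_comap_le _ _)

theorem of_isNormalOfIndex {H K : Subgroup G} (hK : IsPOpen p K) (hHK : IsNormalOfIndex p H K) :
    IsPOpen p H := by
  obtain ⟨hle, _, hindex⟩ := hHK
  rw [← Subgroup.map_subgroupOf_eq_of_le hle]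
  exact hK.map_subtype (of_index_eq_pow (k := 1) (by rw [hindex, pow_one]))

theorem exists_isNormalOfIndex {H : Subgroup G} (hH : IsPOpen p H) (hne : H ≠ ⊤) :
    ∃ K : Subgroup G, IsNormalOfIndex p H K := by
  obtain ⟨N, hNH, _, k, hk⟩ := hH
  have hcomap : (H.map (QuotientGroup.mk' N)).comap (QuotientGroup.mk' N) = H :=
    Subgroup.comap_map_eq_self (by rwa [QuotientGroup.ker_mk'])
  have hmap : H.map (QuotientGroup.mk' N) ≠ ⊤ := fun h ↦
    hne (by rw [← hcomap, h, Subgroup.comap_top])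
  obtain ⟨K, hK⟩ := exists_isNormalOfIndex_of_card_eq_pow (G := G ⧸ N) hk hmap
  exact ⟨K.comap (QuotientGroup.mk' N), hcomap ▸ hK.comap (QuotientGroup.mk'_surjective N)⟩

theorem hasPSubnormalTower {H : Subgroup G} (hH : IsPOpen p H) : HasPSubnormalTower p H := by
  obtain ⟨k, hk⟩ := hH.exists_index_eq_pow
  induction k generalizing H with
  | zero =>
    rw [pow_zero, Subgroup.index_eq_one] at hk
    exact hk ▸ .top
  | succ k ih =>
    have hp : p.Prime := Fact.out
    have hne : H ≠ ⊤ := by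
      rintro rfl
      exact (one_lt_pow₀ hp.one_lt k.succ_ne_zero).ne (Subgroup.index_top.symm.trans hk)
    obtain ⟨K, hHK⟩ := hH.exists_isNormalOfIndex hne
    have hKindex : K.index = p ^ k :=
      Nat.eq_of_mul_eq_mul_left hp.pos (by rw [hHK.mul_index, hk, pow_succ'])
    exact (ih (hH.mono hHK.1) hKindex).of_isNormalOfIndex hHK

end IsPOpen

section Residual

variable {p : ℕ} [Fact p.Prime] {G : Type*} [Group G]

theorem HasPSubnormalTower.isPOpen {H : Subgroup G} (hH : HasPSubnormalTower p H) :
    IsPOpen p H := by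
  obtain ⟨r, c, rfl, hr, hc⟩ := hH
  refine Nat.decreasingInduction (motive := fun i _ ↦ IsPOpen p (c i)) ?_ ?_ r.zero_le
  · exact fun i hi ih ↦ ih.of_isNormalOfIndex (hc i hi)
  · exact hr ▸ IsPOpen.top

theorem pResidual_le_comap {G' : Type*} [Group G'] (f : G →* G') :
    pResidual p G ≤ (pResidual p G').comap f := by
  rw [← Subgroup.map_le_iff_le_comap]
  refine le_iInf₂ fun N ⟨_, k, hk⟩ ↦ ?_
  exact Subgroup.map_le_iff_le_comap.2 ((IsPOpen.of_index_eq_pow hk).comap f).pResidual_le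

theorem isPOpen_pResidual [(pResidual p G).FiniteIndex] : IsPOpen p (pResidual p G) := by
  have hfinite : (pResidual p G).FiniteIndex := inferInstance
  rw [pResidual, ← sInf_eq_iInf] at hfinite ⊢
  exact IsPOpen.sInf_of_finiteIndex fun N ⟨_, k, hk⟩ ↦ .of_index_eq_pow hk

theorem IsPOpen.pResidual_eq_subgroupOf {H : Subgroup G} (hH : IsPOpen p H) :
    pResidual p H = (pResidual p G).subgroupOf H := by
  refine le_antisymm (pResidual_le_comap H.subtype) (le_iInf₂ fun L ⟨_, k, hk⟩ ↦ ?_)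
  have hle : pResidual p G ≤ L.map H.subtype :=
    (hH.map_subtype (IsPOpen.of_index_eq_pow hk)).pResidual_le
  exact (Subgroup.comap_mono hle).trans_eq
    (Subgroup.comap_map_eq_self_of_injective H.subtype_injective L)

theorem IsPOpen.map_pResidual {H : Subgroup G} (hH : IsPOpen p H) :
    (pResidual p H).map H.subtype = pResidual p G := by
  rw [hH.pResidual_eq_subgroupOf, Subgroup.map_subgroupOf_eq_of_le hH.pResidual_le]

end Residual

theorem pSubnormal_tfae_general (G : Type*) [Group G] (p : ℕ) (hp : p.Prime)
    [(pResidual p G).FiniteIndex] (H : Subgroup G) :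
    List.TFAE
      [ (pResidual p ↥H).map H.subtype = pResidual p G,
        pResidual p G ≤ H,
        ∃ (r : ℕ) (c : ℕ → Subgroup G), c 0 = H ∧ c r = ⊤ ∧
          ∀ i < r, c i ≤ c (i + 1) ∧ ((c i).subgroupOf (c (i + 1))).Normal ∧
            ((c i).subgroupOf (c (i + 1))).index = p ] := by
  have : Fact p.Prime := ⟨hp⟩
  tfae_have 1 → 2 := fun h ↦ h ▸ Subgroup.map_subtype_le _
  tfae_have 2 → 3 := fun h ↦ (isPOpen_pResidual.mono h).hasPSubnormalTower
  tfae_have 3 → 1 := fun h ↦ (HasPSubnormalTower.isPOpen h).map_pResidual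
  tfae_finish

/-- For a finite group `G`, a prime `p` and a subgroup `H ≤ G`, the following are
equivalent: (1) `O^p(H) = O^p(G)` (as subgroups of `G`); (2) `H ⊇ O^p(G)`;
(3) there is a `p`-subnormal tower `H = H_r ⊴ H_{r-1} ⊴ ⋯ ⊴ H_0 = G`, i.e. a chain
of subgroups in which each `H_{i+1}` is a normal subgroup of `H_i` of index `p`. -/
theorem pSubnormal_tfae (G : Type*) [Group G] [Fintype G] (p : ℕ) (hp : p.Prime)
    (H : Subgroup G) :
    List.TFAE
      [ (pResidual p ↥H).map H.subtype = pResidual p G,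
        pResidual p G ≤ H,
        ∃ (r : ℕ) (c : ℕ → Subgroup G), c 0 = H ∧ c r = ⊤ ∧
          ∀ i < r, c i ≤ c (i + 1) ∧ ((c i).subgroupOf (c (i + 1))).Normal ∧
            ((c i).subgroupOf (c (i + 1))).index = p ] :=
  pSubnormal_tfae_general G p hp H
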